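/- If a finitely additive measure μ on the positive integers is 𝒢-invariant, i.e., μ(πA) = μ(A) for every A ⊆ ℕ and every permutation π in the Lévy group 𝒢, then μ is a density measure. -/

import Mathlib

open Filter Topology

/-- The counting function `A(n) = |A ∩ [1, n]|`, as a real number. -/
noncomputable def count (A : Set ℕ) (n : ℕ) : ℝ :=
  ((A ∩ Set.Icc 1 n).ncard : ℝ)

/-- `A ⊆ ℕ` has asymptotic density `a`, i.e. `A(n)/n → a`. -/
def HasDensity (A : Set ℕ) (a : ℝ) : Prop :=
  Filter.Tendsto (fun n : ℕ => count A n / n) Filter.atTop (nhds a)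

/-- Membership of a permutation `π` of `ℕ` in the Lévy group `𝒢`:
`|{k : k ≤ n < π(k)}| / n → 0`. -/
def InLevyGroup (π : Equiv.Perm ℕ) : Prop :=
  Filter.Tendsto
    (fun n : ℕ => (({k : ℕ | k ≤ n ∧ n < π k}.ncard : ℝ) / n))
    Filter.atTop (nhds 0)

/-- A finitely additive probability measure defined on all subsets of `ℕ`,
with values in `[0, 1]`. -/
def IsFAMeasure (μ : Set ℕ → ℝ) : Prop :=
  (∀ A : Set ℕ, 0 ≤ μ A) ∧ (∀ A : Set ℕ, μ A ≤ 1) ∧ μ Set.univ = 1 ∧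
    ∀ A B : Set ℕ, Disjoint A B → μ (A ∪ B) = μ A + μ B

/-- A density measure: a finitely additive measure extending asymptotic density. -/
def IsDensityMeasure (μ : Set ℕ → ℝ) : Prop :=
  IsFAMeasure μ ∧ ∀ (A : Set ℕ) (a : ℝ), HasDensity A a → μ A = a

/-- Statistical convergence of a real sequence `x` to `L`: for every `ε > 0`
the set `{n : |x n − L| ≥ ε}` has asymptotic density zero. -/
def StatTendsto (x : ℕ → ℝ) (L : ℝ) : Prop :=
  ∀ ε : ℝ, 0 < ε → HasDensity {n : ℕ | ε ≤ |x n - L|} 0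

/-- The limit of a (bounded) real sequence along an ultrafilter on `ℕ`. -/
noncomputable def ulim (𝒰 : Ultrafilter ℕ) (x : ℕ → ℝ) : ℝ :=
  limUnder (𝒰 : Filter ℕ) x

/-!
If `A` and `B` have the same density `a ∈ (0, 1)`, then the permutation of `ℕ` carrying `A`
increasingly onto `B` and `Aᶜ` increasingly onto `Bᶜ` lies in the Lévy group: only
`O(|A(n) - B(n)| + 1)` elements cross `n`. An invariant `μ` therefore depends only on the density
of a set, as long as that density lies in `(0, 1)`. Sets of density `a` contain subsets of every
smaller density, so splitting off pieces of density `1 / m` gives `μ(C) = j / m` for every set `C`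
of density `j / m > 0`. Hence `μ(A) ≥ ⌊a m⌋ / m` for all `m ≥ 2`, that is, `μ(A) ≥ a`, and the same
bound for `Aᶜ` gives equality.
-/

lemma tendsto_natFloor_div {ι : Type*} {l : Filter ι} {u v : ι → ℝ} {a : ℝ}
    (hu : ∀ i, 0 ≤ u i) (hv : Tendsto v l atTop)
    (h : Tendsto (fun i => u i / v i) l (𝓝 a)) :
    Tendsto (fun i => (⌊u i⌋₊ : ℝ) / v i) l (𝓝 a) := by
  have hlow : Tendsto (fun i => u i / v i - 1 / v i) l (𝓝 a) := by
    simpa using h.sub (hv.const_div_atTop 1)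
  refine tendsto_of_tendsto_of_tendsto_of_le_of_le' hlow h ?_ ?_
  · filter_upwards [hv.eventually_gt_atTop 0] with i hi
    rw [← sub_div]
    exact div_le_div_of_nonneg_right (Nat.sub_one_lt_floor _).le hi.le
  · filter_upwards [hv.eventually_gt_atTop 0] with i hi
    exact div_le_div_of_nonneg_right (Nat.floor_le (hu i)) hi.le

section Count

variable (A B : Set ℕ) (n : ℕ)

lemma count_zero : count A 0 = 0 := by
  simp [count]

lemma count_nonneg : 0 ≤ count A n :=
  Nat.cast_nonneg _

lemma count_univ : count Set.univ n = n := by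
  simp [count, Set.ncard_eq_toFinset_card']

variable {A B n}

lemma count_sdiff (h : B ⊆ A) : count (A \ B) n = count A n - count B n := by
  have hB : B ∩ Set.Icc 1 n ⊆ A ∩ Set.Icc 1 n := Set.inter_subset_inter_left _ h
  rw [eq_sub_iff_add_eq, count, count, count, Set.inter_sdiff_distrib_right, ← Nat.cast_add,
    Set.ncard_sdiff_add_ncard_of_subset hB ((Set.finite_Icc 1 n).inter_of_right A)]

lemma count_succ_of_mem (h : n + 1 ∈ A) : count A (n + 1) = count A n + 1 := by
  rw [count, count, ← Set.insert_Icc_right_eq_Icc_add_one (by omega),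
    Set.inter_insert_of_mem h, Set.ncard_insert_of_notMem (by simp)
      ((Set.finite_Icc 1 n).inter_of_right A), Nat.cast_succ]

lemma count_succ_of_notMem (h : n + 1 ∉ A) : count A (n + 1) = count A n := by
  rw [count, count, ← Set.insert_Icc_right_eq_Icc_add_one (by omega),
    Set.inter_insert_of_notMem h]

lemma count_succ_le : count A (n + 1) ≤ count A n + 1 := by
  by_cases h : n + 1 ∈ A
  · exact (count_succ_of_mem h).le
  · linarith [count_succ_of_notMem h]

lemma monotone_count (A : Set ℕ) : Monotone (count A) := fun _ _ h =>
  Nat.cast_le.2 <| Set.ncard_le_ncard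
    (Set.inter_subset_inter_right A (Set.Icc_subset_Icc_right h))
    ((Set.finite_Icc _ _).inter_of_right A)

lemma count_le_ncard_inter_Iic (A : Set ℕ) (n : ℕ) : count A n ≤ (A ∩ Set.Iic n).ncard :=
  Nat.cast_le.2 <| Set.ncard_le_ncard (Set.inter_subset_inter_right A Set.Icc_subset_Iic_self)
    ((Set.finite_Iic n).inter_of_right A)

lemma ncard_inter_Iic_le_count_add_one (A : Set ℕ) (n : ℕ) :
    ((A ∩ Set.Iic n).ncard : ℝ) ≤ count A n + 1 := by
  have hsub : A ∩ Set.Iic n ⊆ insert 0 (A ∩ Set.Icc 1 n) := by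
    rintro k ⟨hkA, hkn⟩
    rcases Nat.eq_zero_or_pos k with rfl | hk
    · exact Set.mem_insert _ _
    · exact Set.mem_insert_of_mem _ ⟨hkA, hk, hkn⟩
  have hfin := ((Set.finite_Icc 1 n).inter_of_right A).insert 0
  rw [count, ← Nat.cast_succ, Nat.cast_le]
  exact (Set.ncard_le_ncard hsub hfin).trans (Set.ncard_insert_le _ _)

lemma count_setOf_pred_lt {g : ℕ → ℕ} (hzero : g 0 = 0) (hmono : Monotone g)
    (hstep : ∀ n, g (n + 1) ≤ g n + 1) (n : ℕ) : count {k | g (k - 1) < g k} n = g n := by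
  induction n with
  | zero => rw [count_zero, hzero, Nat.cast_zero]
  | succ n ih =>
    by_cases hjump : g n < g (n + 1)
    · rw [count_succ_of_mem hjump, ih, (hstep n).antisymm hjump, Nat.cast_succ]
    · rw [count_succ_of_notMem hjump, ih, (hmono n.le_succ).antisymm (not_lt.1 hjump)]

end Count

section Density

variable {A B : Set ℕ} {a b : ℝ}

lemma hasDensity_univ : HasDensity Set.univ 1 := by
  refine tendsto_const_nhds.congr' ?_
  filter_upwards [eventually_ne_atTop 0] with n hn
  rw [count_univ, div_self (Nat.cast_ne_zero.2 hn)]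

lemma hasDensity_zero_of_finite (hA : A.Finite) : HasDensity A 0 := by
  refine squeeze_zero (fun n => div_nonneg (count_nonneg A n) n.cast_nonneg) (fun n => ?_)
    (tendsto_const_div_atTop_nhds_zero_nat (A.ncard : ℝ))
  exact div_le_div_of_nonneg_right
    (Nat.cast_le.2 (Set.ncard_le_ncard Set.inter_subset_left hA)) n.cast_nonneg

lemma HasDensity.nonneg (hA : HasDensity A a) : 0 ≤ a :=
  ge_of_tendsto' hA fun n => div_nonneg (count_nonneg A n) n.cast_nonneg

lemma HasDensity.infinite (hA : HasDensity A a) (ha : 0 < a) : A.Infinite := fun hfin =>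
  ha.ne (tendsto_nhds_unique (hasDensity_zero_of_finite hfin) hA)

lemma HasDensity.sdiff (hA : HasDensity A a) (hB : HasDensity B b) (h : B ⊆ A) :
    HasDensity (A \ B) (a - b) :=
  (Tendsto.sub hA hB).congr fun n => by rw [count_sdiff h, sub_div]

lemma HasDensity.compl (hA : HasDensity A a) : HasDensity Aᶜ (1 - a) := by
  rw [Set.compl_eq_univ_sdiff]
  exact hasDensity_univ.sdiff hA (Set.subset_univ A)

lemma HasDensity.exists_subset (hA : HasDensity A a) (hb : 0 ≤ b) (hba : b ≤ a) :
    ∃ B ⊆ A, HasDensity B b := by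
  obtain ⟨θ, hθ0, hθ1, rfl⟩ : ∃ θ : ℝ, 0 ≤ θ ∧ θ ≤ 1 ∧ b = θ * a := by
    refine ⟨b / a, div_nonneg hb (hb.trans hba), div_le_one_of_le₀ hba (hb.trans hba), ?_⟩
    exact (div_mul_cancel_of_imp fun ha => le_antisymm (ha ▸ hba) hb).symm
  -- Beatty-type thinning: keep the elements of `A` at which `⌊θ A(n)⌋` jumps.
  let g : ℕ → ℕ := fun n => ⌊θ * count A n⌋₊
  have hnonneg (n : ℕ) : 0 ≤ θ * count A n := mul_nonneg hθ0 (count_nonneg A n)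
  have hzero : g 0 = 0 := by simp [g, count_zero]
  have hmono : Monotone g := fun m n hmn =>
    Nat.floor_le_floor (mul_le_mul_of_nonneg_left (monotone_count A hmn) hθ0)
  have hstep (n : ℕ) : g (n + 1) ≤ g n + 1 := by
    rw [← Nat.floor_add_one (hnonneg n)]
    refine Nat.floor_le_floor ?_
    calc θ * count A (n + 1) ≤ θ * (count A n + 1) := mul_le_mul_of_nonneg_left count_succ_le hθ0
      _ ≤ θ * count A n + 1 := by linarith
  refine ⟨{k | g (k - 1) < g k}, fun k hk => ?_, ?_⟩
  · by_contra hkA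
    cases k with
    | zero => exact lt_irrefl (g 0) hk
    | succ n => simp [g, count_succ_of_notMem hkA] at hk
  · simp only [HasDensity, count_setOf_pred_lt hzero hmono hstep]
    refine tendsto_natFloor_div hnonneg tendsto_natCast_atTop_atTop ?_
    simpa only [mul_div_assoc] using hA.const_mul θ

end Density

section LevyGroup

variable {A B : Set ℕ}

/-- The set of points at most `n` that `f` moves beyond `n`; the Lévy group consists of the
permutations for which it has `o(n)` elements. -/
def crossing (f : ℕ → ℕ) (n : ℕ) : Set ℕ :=
  {k | k ≤ n ∧ n < f k}

lemma crossing_finite (f : ℕ → ℕ) (n : ℕ) : (crossing f n).Finite :=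
  (Set.finite_Iic n).subset fun _ hk => hk.1

lemma ncard_inter_crossing_le {f : ℕ → ℕ} (hf : MonotoneOn f A) (hAB : Set.SurjOn f A B) (n : ℕ) :
    (A ∩ crossing f n).ncard ≤ (A ∩ Set.Iic n).ncard - (B ∩ Set.Iic n).ncard := by
  obtain hempty | ⟨k₀, hk₀A, hk₀n, hk₀⟩ := (A ∩ crossing f n).eq_empty_or_nonempty
  · simp [hempty]
  have hfin : (A ∩ Set.Iic n).Finite := (Set.finite_Iic n).inter_of_right A
  have hsub : A ∩ crossing f n ⊆ A ∩ Set.Iic n := fun k hk => ⟨hk.1, hk.2.1⟩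
  -- As `k₀` crosses `n`, monotonicity forces every preimage of `B ∩ [0, n]` to lie below `k₀ ≤ n`.
  have himage : B ∩ Set.Iic n ⊆ f '' ((A ∩ Set.Iic n) \ (A ∩ crossing f n)) := by
    rintro _ ⟨hlB, hln⟩
    obtain ⟨k, hkA, rfl⟩ := hAB hlB
    have hkk₀ : k < k₀ := hf.reflect_lt hkA hk₀A (hln.trans_lt hk₀)
    exact ⟨k, ⟨⟨hkA, hkk₀.le.trans hk₀n⟩, fun hk => hk.2.2.not_ge hln⟩, rfl⟩
  have hcard : (B ∩ Set.Iic n).ncard ≤ ((A ∩ Set.Iic n) \ (A ∩ crossing f n)).ncard :=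
    (Set.ncard_le_ncard himage (hfin.sdiff.image f)).trans (Set.ncard_image_le hfin.sdiff)
  have hsplit := Set.ncard_sdiff_add_ncard_of_subset hsub hfin
  omega

lemma ncard_inter_crossing_le_abs_count_sub {f : ℕ → ℕ} (hf : MonotoneOn f A)
    (hAB : Set.SurjOn f A B) (n : ℕ) :
    ((A ∩ crossing f n).ncard : ℝ) ≤ |count A n - count B n| + 1 := by
  have hcross := ncard_inter_crossing_le hf hAB n
  have hA := ncard_inter_Iic_le_count_add_one A n
  have hB := count_le_ncard_inter_Iic B n
  rcases le_total (A ∩ Set.Iic n).ncard (B ∩ Set.Iic n).ncard with h | h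
  · rw [Nat.sub_eq_zero_of_le h, Nat.le_zero] at hcross
    rw [hcross, Nat.cast_zero]
    positivity
  · rw [← Nat.cast_le (α := ℝ), Nat.cast_sub h] at hcross
    linarith [le_abs_self (count A n - count B n)]

lemma tendsto_ncard_inter_crossing_div {f : ℕ → ℕ} {a : ℝ} (hf : MonotoneOn f A)
    (hAB : Set.SurjOn f A B) (hA : HasDensity A a) (hB : HasDensity B a) :
    Tendsto (fun n : ℕ => ((A ∩ crossing f n).ncard : ℝ) / n) atTop (𝓝 0) := by
  have hlim : Tendsto (fun n : ℕ => |count A n / n - count B n / n| + 1 / (n : ℝ)) atTop (𝓝 0) := by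
    simpa using (Tendsto.sub hA hB).abs.add (tendsto_const_div_atTop_nhds_zero_nat 1)
  refine squeeze_zero (fun n => by positivity) (fun n => ?_) hlim
  calc ((A ∩ crossing f n).ncard : ℝ) / n
      ≤ (|count A n - count B n| + 1) / n :=
        div_le_div_of_nonneg_right (ncard_inter_crossing_le_abs_count_sub hf hAB n) n.cast_nonneg
    _ = |count A n / n - count B n / n| + 1 / n := by
        rw [add_div, ← sub_div, abs_div, Nat.abs_cast]

lemma inLevyGroup_of_monotoneOn {π : Equiv.Perm ℕ} {a : ℝ} (hπ : MonotoneOn π A)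
    (hπ' : MonotoneOn π Aᶜ) (hA : HasDensity A a) (hB : HasDensity (π '' A) a) :
    InLevyGroup π := by
  have hcompl : Set.SurjOn π Aᶜ (π '' A)ᶜ := (Set.image_compl_eq π.bijective).ge
  have hsum := (tendsto_ncard_inter_crossing_div hπ (Set.surjOn_image π A) hA hB).add
    (tendsto_ncard_inter_crossing_div hπ' hcompl hA.compl hB.compl)
  rw [add_zero] at hsum
  refine hsum.congr fun n => ?_
  rw [← add_div, ← Nat.cast_add, Set.inter_comm A, Set.inter_comm Aᶜ, ← Set.sdiff_eq,
    Set.ncard_inter_add_ncard_sdiff_eq_ncard _ _ (crossing_finite π n)]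
  rfl

lemma exists_perm_image_eq_of_orderIso {α : Type*} [Preorder α] {A B : Set α} (e : A ≃o B)
    (e' : ↥Aᶜ ≃o ↥Bᶜ) :
    ∃ π : Equiv.Perm α, π '' A = B ∧ MonotoneOn π A ∧ MonotoneOn π Aᶜ := by
  classical
  let π : Equiv.Perm α := Equiv.subtypeCongr e.toEquiv e'.toEquiv
  have hπ (x : A) : π x = e x := by simp [π, Equiv.subtypeCongr]
  have hπ' (x : ↥Aᶜ) : π x = e' x := by
    simp [π, Equiv.subtypeCongr, Equiv.sumCompl_symm_apply_of_neg x.2]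
  refine ⟨π, Set.Subset.antisymm ?_ fun y hy => ?_, fun x hx y hy hxy => ?_,
    fun x hx y hy hxy => ?_⟩
  · rintro _ ⟨x, hx, rfl⟩
    exact hπ ⟨x, hx⟩ ▸ (e ⟨x, hx⟩).2
  · exact ⟨e.symm ⟨y, hy⟩, (e.symm ⟨y, hy⟩).2, by rw [hπ, e.apply_symm_apply]⟩
  · rw [hπ ⟨x, hx⟩, hπ ⟨y, hy⟩]
    exact e.monotone hxy
  · rw [hπ' ⟨x, hx⟩, hπ' ⟨y, hy⟩]
    exact e'.monotone hxy

lemma nonempty_orderIso_of_infinite (hA : A.Infinite) (hB : B.Infinite) : Nonempty (A ≃o B) :=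
  have := hA.to_subtype
  have := hB.to_subtype
  ⟨(Nat.Subtype.orderIsoOfNat A).symm.trans (Nat.Subtype.orderIsoOfNat B)⟩

lemma exists_inLevyGroup_image_eq {a : ℝ} (h0 : 0 < a) (h1 : a < 1) (hA : HasDensity A a)
    (hB : HasDensity B a) : ∃ π : Equiv.Perm ℕ, InLevyGroup π ∧ π '' A = B := by
  obtain ⟨e⟩ := nonempty_orderIso_of_infinite (hA.infinite h0) (hB.infinite h0)
  obtain ⟨e'⟩ := nonempty_orderIso_of_infinite (hA.compl.infinite (sub_pos.2 h1))
    (hB.compl.infinite (sub_pos.2 h1))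
  obtain ⟨π, rfl, hπ, hπ'⟩ := exists_perm_image_eq_of_orderIso e e'
  exact ⟨π, inLevyGroup_of_monotoneOn hπ hπ' hA hB, rfl⟩

end LevyGroup

section Measure

variable {μ : Set ℕ → ℝ} {A B : Set ℕ} {a b : ℝ}

/-- Invariance of a set function under the Lévy group. -/
def IsLevyInvariant (μ : Set ℕ → ℝ) : Prop :=
  ∀ (A : Set ℕ) (π : Equiv.Perm ℕ), InLevyGroup π → μ (π '' A) = μ A

lemma IsLevyInvariant.apply_eq_of_hasDensity (hinv : IsLevyInvariant μ) (h0 : 0 < a) (h1 : a < 1)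
    (hA : HasDensity A a) (hB : HasDensity B a) : μ A = μ B := by
  obtain ⟨π, hπ, rfl⟩ := exists_inLevyGroup_image_eq h0 h1 hA hB
  exact (hinv A π hπ).symm

lemma IsFAMeasure.add_apply_sdiff (hμ : IsFAMeasure μ) (h : B ⊆ A) : μ B + μ (A \ B) = μ A := by
  rw [← hμ.2.2.2 B (A \ B) Set.disjoint_sdiff_right, Set.union_sdiff_cancel h]

lemma IsFAMeasure.mono (hμ : IsFAMeasure μ) (h : B ⊆ A) : μ B ≤ μ A := by
  linarith [hμ.add_apply_sdiff h, hμ.1 (A \ B)]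

lemma IsFAMeasure.apply_compl (hμ : IsFAMeasure μ) (A : Set ℕ) : μ Aᶜ = 1 - μ A := by
  rw [Set.compl_eq_univ_sdiff, eq_sub_iff_add_eq', hμ.add_apply_sdiff (Set.subset_univ A), hμ.2.2.1]

lemma IsFAMeasure.apply_eq_mul_of_hasDensity (hμ : IsFAMeasure μ) (hinv : IsLevyInvariant μ)
    (h0 : 0 < b) (h1 : b < 1) (hB : HasDensity B b) {j : ℕ} (hj : 1 ≤ j)
    (hA : HasDensity A (j * b)) : μ A = j * μ B := by
  induction j, hj using Nat.le_induction generalizing A with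
  | base =>
    rw [Nat.cast_one, one_mul] at hA ⊢
    exact hinv.apply_eq_of_hasDensity h0 h1 hA hB
  | succ j _ ih =>
    rw [Nat.cast_succ, add_one_mul] at hA
    obtain ⟨C, hCA, hC⟩ := hA.exists_subset h0.le (le_add_of_nonneg_left (by positivity))
    have hrest : HasDensity (A \ C) (j * b) := by
      simpa only [add_sub_cancel_right] using hA.sdiff hC hCA
    rw [← hμ.add_apply_sdiff hCA, ih hrest, hinv.apply_eq_of_hasDensity h0 h1 hC hB,
      Nat.cast_succ, add_one_mul, add_comm]

lemma IsFAMeasure.apply_eq_div_of_hasDensity (hμ : IsFAMeasure μ) (hinv : IsLevyInvariant μ)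
    {j m : ℕ} (hj : 1 ≤ j) (hm : 2 ≤ m) (hA : HasDensity A (j / m)) : μ A = j / m := by
  have hm1 : (1 : ℝ) < m := Nat.one_lt_cast.2 hm
  have hm0 : (0 : ℝ) < m := one_pos.trans hm1
  have hpos : 0 < (m : ℝ)⁻¹ := inv_pos.2 hm0
  have hlt : (m : ℝ)⁻¹ < 1 := inv_lt_one_of_one_lt₀ hm1
  obtain ⟨B, -, hB⟩ := hasDensity_univ.exists_subset hpos.le hlt.le
  have hmul {k : ℕ} {C : Set ℕ} (hk : 1 ≤ k) (hC : HasDensity C (k * (m : ℝ)⁻¹)) :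
      μ C = k * μ B :=
    hμ.apply_eq_mul_of_hasDensity hinv hpos hlt hB hk hC
  have huniv : HasDensity Set.univ (m * (m : ℝ)⁻¹) := by
    rw [mul_inv_cancel₀ hm0.ne']
    exact hasDensity_univ
  have hμB : μ B = (m : ℝ)⁻¹ := by
    rw [← mul_eq_one_iff_eq_inv₀ hm0.ne', mul_comm, ← hmul (by omega) huniv, hμ.2.2.1]
  rw [div_eq_mul_inv] at hA ⊢
  rw [hmul hj hA, hμB]

lemma IsFAMeasure.div_le_of_hasDensity (hμ : IsFAMeasure μ) (hinv : IsLevyInvariant μ) {j m : ℕ}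
    (hm : 2 ≤ m) (hA : HasDensity A a) (hja : (j : ℝ) / m ≤ a) : (j : ℝ) / m ≤ μ A := by
  obtain rfl | hj := Nat.eq_zero_or_pos j
  · simpa using hμ.1 A
  · obtain ⟨B, hBA, hB⟩ := hA.exists_subset (by positivity) hja
    exact (hμ.apply_eq_div_of_hasDensity hinv hj hm hB).ge.trans (hμ.mono hBA)

lemma IsFAMeasure.le_of_hasDensity (hμ : IsFAMeasure μ) (hinv : IsLevyInvariant μ)
    (hA : HasDensity A a) : a ≤ μ A := by
  have hfloor : Tendsto (fun m : ℕ => (⌊a * m⌋₊ : ℝ) / m) atTop (𝓝 a) :=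
    (tendsto_nat_floor_mul_div_atTop hA.nonneg).comp tendsto_natCast_atTop_atTop
  refine le_of_tendsto hfloor ?_
  filter_upwards [eventually_ge_atTop 2] with m hm
  have hm0 : (0 : ℝ) < m := by positivity
  refine hμ.div_le_of_hasDensity hinv hm hA ?_
  exact (div_le_iff₀ hm0).2 (Nat.floor_le (mul_nonneg hA.nonneg hm0.le))

end Measure

/-- If a finitely additive measure `μ` on `ℕ` is invariant under the Lévy
group, then it is a density measure. -/
theorem isDensityMeasure_of_levyGroup_invariant
    (μ : Set ℕ → ℝ) (hμ : IsFAMeasure μ)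
    (hinv : ∀ (A : Set ℕ) (π : Equiv.Perm ℕ), InLevyGroup π → μ (π '' A) = μ A) :
    IsDensityMeasure μ := by
  refine ⟨hμ, fun A a hA => le_antisymm ?_ (hμ.le_of_hasDensity hinv hA)⟩
  have hcompl : 1 - a ≤ 1 - μ A := by
    rw [← hμ.apply_compl]
    exact hμ.le_of_hasDensity hinv hA.compl
  linarith
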